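/- arXiv:1503.03111 — 2 statements merged into one kernel-verified Lean document; each statement's English description precedes it below -/
import Mathlib

section
/- Let d ≥ 2 and let K ⊆ ℝ^d be a convex body. Then coin(K) ≤ 2·N_{1/2}(K). Moreover, if K is o-symmetric (K = −K), then 2·N_{1/2}(K) ≤ 3^d·(2d)·(ln d + ln ln d + 5), and for an arbitrary convex body K, 2·N_{1/2}(K) ≤ 2^{d+1}·(C(2d,d)^{1/d} − 1/2)^d·d·(ln d + ln ln d + 5), where C(2d,d) denotes the binomial coefficient (2d choose d). -/
open Set Pointwise

section Defs

variable {V : Type*} [NormedAddCommGroup V] [NormedSpace ℝ V]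

/-- A convex body: compact, convex, with nonempty interior. -/
def IsConvexBody (K : Set V) : Prop :=
  IsCompact K ∧ Convex ℝ K ∧ (interior K).Nonempty

/-- `K` can be covered by `m` homothets of ratio `lam`. -/
def CoversWith (K : Set V) (lam : ℝ) (m : ℕ) : Prop :=
  ∃ t : Fin m → V, K ⊆ ⋃ i, (fun x => lam • x + t i) '' K

/-- The `m`-covering number `γ_m(K)`. -/
noncomputable def gammaC (m : ℕ) (K : Set V) : ℝ :=
  sInf {lam : ℝ | 0 < lam ∧ CoversWith K lam m}

/-- The covering index `coin(K)`. -/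
noncomputable def coin (K : Set V) : ℝ :=
  sInf {r : ℝ | ∃ m : ℕ, 0 < m ∧ gammaC m K ≤ 1 / 2 ∧ r = (m : ℝ) / (1 - gammaC m K)}

/-- The weak covering index `wcoin(K)`. -/
noncomputable def wcoin (K : Set V) : ℝ :=
  sInf {r : ℝ | ∃ m : ℕ, 0 < m ∧ gammaC m K < 1 ∧ r = (m : ℝ) / (1 - gammaC m K)}

/-- `N_λ(K)`: the least number of translates of `λ • K` needed to cover `K`. -/
noncomputable def covN (lam : ℝ) (K : Set V) : ℕ :=
  sInf {n : ℕ | CoversWith K lam n}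

/-- A convex body is tightly covered if for every `0 < λ < 1` it contains `N_λ(K)`
points no two of which lie in a common homothet `λ • K + t`. -/
def TightlyCovered (K : Set V) : Prop :=
  ∀ lam : ℝ, 0 < lam → lam < 1 →
    ∃ p : Fin (covN lam K) → V, (∀ i, p i ∈ K) ∧
      ∀ i j, i ≠ j → ∀ t : V,
        ¬(p i ∈ (fun x => lam • x + t) '' K ∧ p j ∈ (fun x => lam • x + t) '' K)

/-- The covering parameter `C(K)` of Swanepoel. -/
noncomputable def covParam (K : Set V) : ℝ :=
  sInf {r : ℝ | ∃ k : ℕ, ∃ lam : Fin k → ℝ, ∃ t : Fin k → V,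
    (∀ i, 0 < lam i ∧ lam i < 1) ∧
    (K ⊆ ⋃ i, (fun x => lam i • x + t i) '' K) ∧
    r = ∑ i, 1 / (1 - lam i)}

/-- The (multiplicative) Banach–Mazur distance. -/
noncomputable def distBM {d : ℕ} (K L : Set (Fin d → ℝ)) : ℝ :=
  sInf {δ : ℝ | 1 ≤ δ ∧ ∃ T : (Fin d → ℝ) ≃ₗ[ℝ] (Fin d → ℝ), ∃ a ∈ K, ∃ b ∈ L,
    (fun x => x - b) '' L ⊆ T '' ((fun x => x - a) '' K) ∧
    T '' ((fun x => x - a) '' K) ⊆ δ • ((fun x => x - b) '' L)}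

end Defs

/-!
Fix a point `c` and let `L` be the symmetric core of `K` at `c`, so that a translate of `λL` lies in
`λK`. Write `P = λL`. A translate of `(1 - η)P` chosen at random near `K` covers on average a fixed
proportion of any given subset of `K + ηP`, so `M` greedily chosen translates leave a part of
`K + ηP` whose volume is exponentially small in `M`. A maximal family of points of `K` which are
missed by the enlarged translates of `P` and whose differences avoid `P` packs disjoint copies of
`ηP` into that leftover part; hence it is small, and adding its points as new centres completes a
covering of `K` by translates of `P`. With `M` a suitable multiple of `d log d` and Rogers' choice
`η = 2 / (3 d log d)` this gives the factor `d (log d + log log d + 5)`, multiplied by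
`(1 + 1 / λ) ^ d` and divided by the volume ratio `g = |L| / |K|`.

If `K = -K` then `g = 1`. In general, averaging `|K ∩ (t - K)|` over `t ∈ 2lK` gives a core with
`g ≥ 2⁻ᵈ` (take `l = 1`), and `C(2d,d)^(1/d) ≥ 7 / 2` absorbs this loss once `d ≥ 15`. In smaller
dimensions `l = 19 / 20` gives a better core; there the packing step alone (`d ≤ 6`) or the whole
argument with `η = 1 / 20` is compared with the bound numerically.
-/

open MeasureTheory Module

section Translates

variable {G : Type*} [AddCommGroup G]

theorem exists_finset_subset_add_of_card_le {R P : Set G} (hP0 : 0 ∈ P) (hPneg : -P = P) {b : ℝ}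
    (hb : ∀ Y : Finset G, ↑Y ⊆ R → (Y : Set G).Pairwise (fun y z ↦ z - y ∉ P) → (Y.card : ℝ) ≤ b) :
    ∃ Y : Finset G, (Y.card : ℝ) ≤ b ∧ R ⊆ ↑Y + P := by
  classical
  by_contra! hcon
  have large (n : ℕ) : ∃ Y : Finset G, ↑Y ⊆ R ∧ (Y : Set G).Pairwise (fun y z ↦ z - y ∉ P) ∧
      n ≤ Y.card := by
    induction n with
    | zero => exact ⟨∅, by simp⟩
    | succ n ih =>
      obtain ⟨Y, hYR, hY, hn⟩ := ih
      obtain ⟨x, hxR, hx⟩ := Set.not_subset.1 (hcon Y (hb Y hYR hY))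
      have hxy : ∀ y ∈ Y, x - y ∉ P := fun y hy h ↦ hx ⟨y, hy, x - y, h, add_sub_cancel y x⟩
      have hxY : x ∉ Y := fun h ↦ hxy x h (by simpa using hP0)
      refine ⟨insert x Y, ?_, ?_, by rw [Finset.card_insert_of_notMem hxY]; lia⟩
      · rw [Finset.coe_insert]
        exact insert_subset hxR hYR
      · rw [Finset.coe_insert]
        refine hY.insert fun y hy _ ↦ ⟨fun h ↦ hxy y hy ?_, hxy y hy⟩
        rwa [← hPneg, Set.mem_neg, neg_sub]
  obtain ⟨n, hn⟩ := exists_nat_gt b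
  obtain ⟨Y, hYR, hY, hnY⟩ := large n
  have hnY' : (n : ℝ) ≤ Y.card := by exact_mod_cast hnY
  linarith [hb Y hYR hY]

variable [MeasurableSpace G] {μ : Measure G}

theorem card_mul_measureReal_le [MeasurableAdd G] [μ.IsAddLeftInvariant] {Y : Finset G}
    {s t : Set G} (hs : MeasurableSet s) (hdisj : (Y : Set G).PairwiseDisjoint (· +ᵥ s))
    (hst : ↑Y + s ⊆ t) (ht : μ t ≠ ⊤) : (Y.card : ℝ) * μ.real s ≤ μ.real t := by
  have hY : ⋃ y ∈ Y, (y +ᵥ s) ⊆ t := (iUnion_vadd_set (Y : Set G) s).trans_subset hst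
  have hmeas : ∀ y ∈ Y, MeasurableSet (y +ᵥ s) := fun y _ ↦ hs.const_vadd y
  have hfin : ∀ y ∈ Y, μ (y +ᵥ s) ≠ ⊤ := fun y hy ↦
    measure_ne_top_of_subset ((subset_biUnion_of_mem (u := (· +ᵥ s)) hy).trans hY) ht
  calc (Y.card : ℝ) * μ.real s = ∑ y ∈ Y, μ.real (y +ᵥ s) := by simp [Measure.real]
    _ = μ.real (⋃ y ∈ Y, (y +ᵥ s)) := (measureReal_biUnion_finset hdisj hmeas hfin).symm
    _ ≤ μ.real t := measureReal_mono hY ht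

theorem measureReal_le_measureReal_add [MeasurableAdd G] [μ.IsAddLeftInvariant] {s t : Set G}
    (hs : s.Nonempty) (hst : μ (s + t) ≠ ⊤) : μ.real t ≤ μ.real (s + t) := by
  obtain ⟨x, hx⟩ := hs
  calc μ.real t = μ.real (x +ᵥ t) := by simp [Measure.real]
    _ ≤ μ.real (s + t) := measureReal_mono (vadd_set_subset_vadd hx) hst

variable [MeasurableAdd₂ G] [MeasurableNeg G] [SFinite μ] [μ.IsAddLeftInvariant] {A B W : Set G}

theorem setLIntegral_measure_inter_vadd_neg (hA : MeasurableSet A) (hB : MeasurableSet B)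
    (hW : MeasurableSet W) :
    ∫⁻ t in W, μ (A ∩ (t +ᵥ -B)) ∂μ = μ.prod μ (A ×ˢ B ∩ {p | p.1 + p.2 ∈ W}) := by
  have hS : MeasurableSet (A ×ˢ B ∩ {p : G × G | p.1 + p.2 ∈ W}) :=
    (hA.prod hB).inter (hW.preimage measurable_add)
  -- The shear `(a, t) ↦ (a, -a + t)` carries the slices over `t ∈ W` to the pairs with sum in `W`.
  have shear := measurePreserving_prod_neg_add μ μ
  rw [← shear.measure_preimage hS.nullMeasurableSet,
    Measure.prod_apply_symm (shear.measurable hS), ← lintegral_indicator hW]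
  refine lintegral_congr fun t ↦ ?_
  by_cases ht : t ∈ W
  · rw [indicator_of_mem ht]
    congr 1
    ext a
    simp [ht, mem_vadd_set_iff_neg_vadd_mem]
  · simp [ht]

theorem exists_measureReal_prod_div_le (hA : MeasurableSet A) (hB : MeasurableSet B)
    (hW : MeasurableSet W) (hAfin : μ A ≠ ⊤) (hW0 : μ W ≠ 0) (hWfin : μ W ≠ ⊤) :
    ∃ t : G, (μ.prod μ).real (A ×ˢ B ∩ {p | p.1 + p.2 ∈ W}) / μ.real W ≤
      μ.real (A ∩ (t +ᵥ -B)) := by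
  have hint : ∫⁻ t in W, μ (A ∩ (t +ᵥ -B)) ∂μ ≠ ⊤ := by
    refine ne_top_of_le_ne_top (ENNReal.mul_ne_top hAfin hWfin) ?_
    calc ∫⁻ t in W, μ (A ∩ (t +ᵥ -B)) ∂μ ≤ ∫⁻ _ in W, μ A ∂μ :=
          lintegral_mono fun t ↦ measure_mono inter_subset_left
      _ = μ A * μ W := setLIntegral_const W (μ A)
  obtain ⟨t, -, ht⟩ := exists_setLAverage_le hW0 hW.nullMeasurableSet hint
  rw [setLAverage_eq, setLIntegral_measure_inter_vadd_neg hA hB hW] at ht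
  exact ⟨t, (ENNReal.toReal_div _ _).symm.trans_le
    (ENNReal.toReal_mono (measure_ne_top_of_subset inter_subset_left hAfin) ht)⟩

variable [μ.IsNegInvariant] {U Q : Set G}

theorem exists_measureReal_sdiff_vadd_le (hU : MeasurableSet U) (hQ : MeasurableSet Q)
    (hW : MeasurableSet W) (hUfin : μ U ≠ ⊤) (hW0 : μ W ≠ 0) (hWfin : μ W ≠ ⊤) (hUQ : U - Q ⊆ W) :
    ∃ t : G, μ.real (U \ (t +ᵥ Q)) ≤ (1 - μ.real Q / μ.real W) * μ.real U := by
  obtain ⟨t, ht⟩ := exists_measureReal_prod_div_le hU hQ.neg hW hUfin hW0 hWfin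
  have hprod : U ×ˢ (-Q) ∩ {p | p.1 + p.2 ∈ W} = U ×ˢ (-Q) :=
    inter_eq_left.2 fun p hp ↦ hUQ ⟨p.1, hp.1, -p.2, hp.2, sub_neg_eq_add p.1 p.2⟩
  rw [hprod, measureReal_prod_prod, neg_neg] at ht
  have hQneg : μ.real (-Q) = μ.real Q := by simp [Measure.real]
  have hsplit := measureReal_inter_add_sdiff (s := U) (hQ.const_vadd t) hUfin
  refine ⟨t, ?_⟩
  calc μ.real (U \ (t +ᵥ Q)) = μ.real U - μ.real (U ∩ (t +ᵥ Q)) := by linarith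
    _ ≤ μ.real U - μ.real U * μ.real (-Q) / μ.real W := by gcongr
    _ = (1 - μ.real Q / μ.real W) * μ.real U := by rw [hQneg]; ring

theorem exists_finset_measureReal_sdiff_add_le (hU : MeasurableSet U) (hQ : MeasurableSet Q)
    (hW : MeasurableSet W) (hUfin : μ U ≠ ⊤) (hW0 : μ W ≠ 0) (hWfin : μ W ≠ ⊤) (hUQ : U - Q ⊆ W)
    (hQW : μ.real Q ≤ μ.real W) (M : ℕ) :
    ∃ T : Finset G, T.card ≤ M ∧
      μ.real (U \ (↑T + Q)) ≤ (1 - μ.real Q / μ.real W) ^ M * μ.real U := by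
  classical
  induction M with
  | zero => exact ⟨∅, by simp⟩
  | succ M ih =>
    obtain ⟨T, hT, hTvol⟩ := ih
    have hTQ : MeasurableSet ((T : Set G) + Q) := by
      rw [← vadd_eq_add, ← iUnion_vadd_set]
      exact T.measurableSet_biUnion fun t _ ↦ hQ.const_vadd t
    obtain ⟨t, ht⟩ := exists_measureReal_sdiff_vadd_le (hU.diff hTQ) hQ hW
      (measure_ne_top_of_subset sdiff_subset hUfin) hW0 hWfin
      ((sub_subset_sub_right sdiff_subset).trans hUQ)
    refine ⟨insert t T, (Finset.card_insert_le _ _).trans (by lia), ?_⟩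
    have hinsert : U \ (↑(insert t T) + Q) = (U \ (↑T + Q)) \ (t +ᵥ Q) := by
      rw [Finset.coe_insert, insert_eq, union_comm, union_add, singleton_add, sdiff_sdiff]
      rfl
    have hratio : 0 ≤ 1 - μ.real Q / μ.real W :=
      sub_nonneg.2 (div_le_one_of_le₀ hQW measureReal_nonneg)
    calc μ.real (U \ (↑(insert t T) + Q))
        ≤ (1 - μ.real Q / μ.real W) * μ.real (U \ (↑T + Q)) := hinsert ▸ ht
      _ ≤ (1 - μ.real Q / μ.real W) * ((1 - μ.real Q / μ.real W) ^ M * μ.real U) := by gcongr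
      _ = (1 - μ.real Q / μ.real W) ^ (M + 1) * μ.real U := by ring

end Translates

section AbsConvex

variable {E : Type*} [AddCommGroup E] [Module ℝ E] {P : Set E} {η : ℝ}

theorem pairwiseDisjoint_vadd_smul {Y : Set E} (hP : AbsConvex ℝ P)
    (hY : Y.Pairwise fun y z ↦ z - y ∉ P) (hη0 : 0 ≤ η) (hη : η ≤ 1 / 2) :
    Y.PairwiseDisjoint (· +ᵥ η • P) := by
  intro y hy z hz hyz
  refine Set.disjoint_left.2 ?_
  rintro _ ⟨p, hp, rfl⟩ ⟨q, hq, hqp⟩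
  refine hY hy hz hyz ?_
  have hsub : z - y = p + -q := by
    rw [← sub_eq_add_neg, sub_eq_sub_iff_add_eq_add]
    simpa [add_comm] using hqp
  have hmem : p + -q ∈ (η + η) • P := by
    rw [hP.2.add_smul hη0 hη0]
    exact Set.add_mem_add hp ((hP.1.smul η).neg_mem_iff.2 hq)
  rw [hsub, ← one_smul ℝ P]
  exact hP.1.smul_mono (by rw [Real.norm_of_nonneg (by positivity), norm_one]; linarith) hmem

theorem add_smul_subset_sdiff {K T Y : Set E} (hP : AbsConvex ℝ P) (hη0 : 0 ≤ η) (hη : η ≤ 1)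
    (hY : Y ⊆ K \ (T + P)) : Y + η • P ⊆ (K + η • P) \ (T + (1 - η) • P) := by
  rintro _ ⟨y, hy, p, hp, rfl⟩
  refine ⟨Set.add_mem_add (hY hy).1 hp, ?_⟩
  rintro ⟨t, ht, q, hq, hqp⟩
  have hmem : q + -p ∈ P := by
    rw [← one_smul ℝ P, ← sub_add_cancel 1 η, hP.2.add_smul (sub_nonneg.2 hη) hη0]
    exact Set.add_mem_add hq ((hP.1.smul η).neg_mem_iff.2 hp)
  refine (hY hy).2 ⟨t, ht, q + -p, hmem, ?_⟩
  dsimp only at hqp ⊢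
  rw [← add_assoc, hqp, add_neg_cancel_right]

end AbsConvex

section Haar

variable {E : Type*} [NormedAddCommGroup E] [NormedSpace ℝ E] [FiniteDimensional ℝ E]
  [MeasurableSpace E] [BorelSpace E] (μ : Measure E) [μ.IsAddHaarMeasure] {K P : Set E}

theorem measureReal_smul {r : ℝ} (hr : 0 ≤ r) (S : Set E) :
    μ.real (r • S) = r ^ finrank ℝ E * μ.real S := by
  rw [Measure.real, Measure.addHaar_smul, ENNReal.toReal_mul, abs_of_nonneg (by positivity),
    ENNReal.toReal_ofReal (by positivity), Measure.real]

theorem measureReal_smul_le_measureReal_add {r : ℝ} (hK : IsCompact K) (hKne : K.Nonempty)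
    (hP : IsCompact P) (hr0 : 0 ≤ r) (hr1 : r ≤ 1) : μ.real (r • P) ≤ μ.real (K + P) :=
  calc μ.real (r • P) = r ^ finrank ℝ E * μ.real P := measureReal_smul μ hr0 P
    _ ≤ μ.real P := mul_le_of_le_one_left measureReal_nonneg (pow_le_one₀ hr0 hr1)
    _ ≤ μ.real (K + P) := measureReal_le_measureReal_add hKne (hK.add hP).measure_ne_top

theorem exists_finset_sdiff_subset_add_card_le {η : ℝ} (T : Set E) (hK : IsCompact K)
    (hPc : IsCompact P) (hP : AbsConvex ℝ P) (hP0 : μ P ≠ 0) (hη0 : 0 < η) (hη : η ≤ 1 / 2) :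
    ∃ Y : Finset E, K \ (T + P) ⊆ ↑Y + P ∧
      (Y.card : ℝ) ≤ μ.real ((K + η • P) \ (T + (1 - η) • P)) / μ.real (η • P) := by
  have hηP : 0 < μ.real (η • P) := by
    rw [measureReal_smul μ hη0.le]
    have := ENNReal.toReal_pos hP0 hPc.measure_ne_top
    positivity
  have hsep (Y : Finset E) (hYR : ↑Y ⊆ K \ (T + P))
      (hY : (Y : Set E).Pairwise fun y z ↦ z - y ∉ P) :
      (Y.card : ℝ) ≤ μ.real ((K + η • P) \ (T + (1 - η) • P)) / μ.real (η • P) := by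
    rw [le_div_iff₀ hηP]
    exact card_mul_measureReal_le (hPc.smul η).measurableSet
      (pairwiseDisjoint_vadd_smul hP hY hη0.le hη)
      (add_smul_subset_sdiff hP hη0.le (by linarith) hYR)
      (measure_ne_top_of_subset sdiff_subset (hK.add (hPc.smul η)).measure_ne_top)
  obtain ⟨Y, hYcard, hY⟩ := exists_finset_subset_add_of_card_le
    (hP.1.zero_mem (nonempty_of_measure_ne_zero hP0)) hP.1.neg_eq hsep
  exact ⟨Y, hY, hYcard⟩

theorem exists_finset_subset_add_card_le {η : ℝ} (hK : IsCompact K) (hKne : K.Nonempty)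
    (hPc : IsCompact P) (hP : AbsConvex ℝ P) (hP0 : μ P ≠ 0) (hη0 : 0 < η) (hη : η ≤ 1 / 2)
    (M : ℕ) :
    ∃ T : Finset E, K ⊆ ↑T + P ∧ (T.card : ℝ) ≤
      M + μ.real (K + η • P) / μ.real (η • P) *
        (1 - μ.real ((1 - η) • P) / μ.real (K + P)) ^ M := by
  classical
  have hη1 : 0 ≤ 1 - η := by linarith
  have hU : IsCompact (K + η • P) := hK.add (hPc.smul η)
  have hW : IsCompact (K + P) := hK.add hPc
  have hPW : μ.real P ≤ μ.real (K + P) := measureReal_le_measureReal_add hKne hW.measure_ne_top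
  have hW0 : μ (K + P) ≠ 0 := (measureReal_ne_zero_iff hW.measure_ne_top).1
    ((ENNReal.toReal_pos hP0 hPc.measure_ne_top).trans_le hPW).ne'
  have hUQ : K + η • P - (1 - η) • P ⊆ K + P := by
    rw [sub_eq_add_neg, (hP.1.smul (1 - η)).neg_eq, add_assoc, ← hP.2.add_smul hη0.le hη1,
      add_sub_cancel, one_smul]
  obtain ⟨T, hTM, hT⟩ := exists_finset_measureReal_sdiff_add_le hU.measurableSet
    (hPc.smul (1 - η)).measurableSet hW.measurableSet hU.measure_ne_top hW0 hW.measure_ne_top hUQ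
    (measureReal_smul_le_measureReal_add μ hK hKne hPc hη1 (by linarith)) M
  obtain ⟨Y, hY, hYcard⟩ := exists_finset_sdiff_subset_add_card_le μ ↑T hK hPc hP hP0 hη0 hη
  refine ⟨T ∪ Y, ?_, ?_⟩
  · rw [Finset.coe_union, union_add]
    exact sdiff_subset_iff.1 hY
  · calc ((T ∪ Y).card : ℝ) ≤ T.card + Y.card := by exact_mod_cast Finset.card_union_le T Y
      _ ≤ M + (1 - μ.real ((1 - η) • P) / μ.real (K + P)) ^ M * μ.real (K + η • P) /
            μ.real (η • P) := by
          gcongr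
          exact hYcard.trans (by gcongr)
      _ = _ := by ring

end Haar

namespace IsConvexBody

variable {V : Type*} [NormedAddCommGroup V] [NormedSpace ℝ V] {K : Set V}

theorem nonempty (hK : IsConvexBody K) : K.Nonempty :=
  hK.2.2.mono interior_subset

theorem vadd (hK : IsConvexBody K) (x : V) : IsConvexBody (x +ᵥ K) :=
  ⟨hK.1.vadd x, hK.2.1.vadd x, by rw [interior_vadd]; exact hK.2.2.vadd_set⟩

theorem measureReal_pos [MeasurableSpace V] (μ : Measure V) [μ.IsOpenPosMeasure]
    [IsFiniteMeasureOnCompacts μ] (hK : IsConvexBody K) : 0 < μ.real K :=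
  ENNReal.toReal_pos (Measure.measure_pos_of_nonempty_interior μ hK.2.2).ne' hK.1.measure_ne_top

end IsConvexBody

section SymmCore

variable {E : Type*} [AddCommGroup E] {K : Set E}

/-- The symmetric core of `K` at `c`: the intersection of `K` with its reflection in `c`, translated
so that its centre of symmetry is the origin. -/
def symmCore (K : Set E) (c : E) : Set E := (-c +ᵥ K) ∩ (c +ᵥ -K)

theorem mem_symmCore {c u : E} : u ∈ symmCore K c ↔ c + u ∈ K ∧ c - u ∈ K := by
  simp [symmCore, mem_vadd_set_iff_neg_vadd_mem, sub_eq_add_neg, add_comm]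

theorem symmCore_zero_of_eq_neg (hK : K = -K) : symmCore K 0 = K := by
  rw [symmCore, ← hK, neg_zero, zero_vadd, inter_self]

theorem symmCore_vadd (K : Set E) (x c : E) : symmCore (x +ᵥ K) c = symmCore K (-x + c) := by
  ext u
  simp [mem_symmCore, mem_vadd_set_iff_neg_vadd_mem, ← add_assoc, add_sub_assoc]

theorem vadd_symmCore (K : Set E) (c : E) : c +ᵥ symmCore K c = K ∩ ((c + c) +ᵥ -K) := by
  rw [symmCore, vadd_set_inter, vadd_vadd, vadd_vadd, add_neg_cancel, zero_vadd]

theorem isCompact_symmCore [TopologicalSpace E] [IsTopologicalAddGroup E] [T2Space E]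
    (hK : IsCompact K) (c : E) : IsCompact (symmCore K c) :=
  (hK.vadd (-c)).inter (hK.neg.vadd c)

variable [Module ℝ E]

theorem absConvex_symmCore (hK : Convex ℝ K) (c : E) : AbsConvex ℝ (symmCore K c) := by
  have hconv : Convex ℝ (symmCore K c) := (hK.vadd (-c)).inter (hK.neg.vadd c)
  refine ⟨(balanced_iff_neg_mem hconv).2 fun u hu ↦ ?_, hconv⟩
  rw [mem_symmCore, sub_neg_eq_add, ← sub_eq_add_neg, and_comm]
  exact mem_symmCore.1 hu

theorem add_smul_symmCore_subset {s : ℝ} (hK : Convex ℝ K) (c : E) (hs : 0 ≤ s) :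
    K + s • symmCore K c ⊆ -(s • c) +ᵥ (1 + s) • K := by
  rw [hK.add_smul zero_le_one hs, one_smul]
  rintro _ ⟨x, hx, _, ⟨u, hu, rfl⟩, rfl⟩
  exact ⟨x + s • (c + u), Set.add_mem_add hx ⟨c + u, (mem_symmCore.1 hu).1, rfl⟩,
    by simp [add_left_comm]⟩

end SymmCore

section Staircase

/-- A lower bound for the fraction of the volume of a `d`-dimensional convex body `K` which some
symmetric core occupies. The numerator is the relative volume of the staircase
`(2l-1)K × K ∪ lK × lK ∪ K × (2l-1)K` in `K × K`, all of whose points have their sum in `2lK`, and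
the denominator is the relative volume of `2lK`. -/
noncomputable def staircaseRatio (d : ℕ) (l : ℝ) : ℝ :=
  ((l ^ d) ^ 2 + 2 * (2 * l - 1) ^ d * (1 - l ^ d)) / (2 * l) ^ d

theorem staircaseRatio_one (d : ℕ) : staircaseRatio d 1 = 1 / 2 ^ d := by
  norm_num [staircaseRatio]

theorem staircaseRatio_pos {d : ℕ} {l : ℝ} (hl : 1 / 2 < l) (hl1 : l ≤ 1) :
    0 < staircaseRatio d l := by
  have : 0 < 2 * l - 1 := by linarith
  have : 0 ≤ 1 - l ^ d := sub_nonneg.2 (pow_le_one₀ (by linarith) hl1)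
  unfold staircaseRatio
  positivity

theorem measureReal_prod_staircase {α : Type*} [MeasurableSpace α] {μ : Measure α} [SFinite μ]
    {A B C : Set α} (hA : MeasurableSet A) (hB : MeasurableSet B) (hC : MeasurableSet C)
    (hAB : A ⊆ B) (hBC : B ⊆ C) (hCfin : μ C ≠ ⊤) :
    (μ.prod μ).real (A ×ˢ C ∪ B ×ˢ B ∪ C ×ˢ A) =
      μ.real B ^ 2 + 2 * μ.real A * (μ.real C - μ.real B) := by
  have hBfin : μ B ≠ ⊤ := measure_ne_top_of_subset hBC hCfin
  have hdecomp : A ×ˢ C ∪ B ×ˢ B ∪ C ×ˢ A = A ×ˢ C ∪ (B \ A) ×ˢ B ∪ (C \ B) ×ˢ A := by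
    ext ⟨x, y⟩
    have := @hAB x; have := @hAB y; have := @hBC x; have := @hBC y
    simp only [mem_union, mem_prod, Set.mem_sdiff]
    tauto
  have hdisj₁ : Disjoint (A ×ˢ C) ((B \ A) ×ˢ B) :=
    disjoint_prod.2 (.inl disjoint_sdiff_self_right)
  have hdisj₂ : Disjoint (A ×ˢ C ∪ (B \ A) ×ˢ B) ((C \ B) ×ˢ A) :=
    .union_left (disjoint_prod.2 (.inl (disjoint_sdiff_self_right.mono_left hAB)))
      (disjoint_prod.2 (.inl (disjoint_sdiff_self_right.mono_left sdiff_subset)))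
  have hfin {S T : Set α} (hS : S ⊆ C) (hT : T ⊆ C) : μ.prod μ (S ×ˢ T) ≠ ⊤ :=
    measure_ne_top_of_subset (prod_mono hS hT)
      (Measure.prod_prod (μ := μ) (ν := μ) C C ▸ ENNReal.mul_ne_top hCfin hCfin)
  have hfin₁ := hfin (hAB.trans hBC) subset_rfl
  have hfin₂ := hfin (sdiff_subset.trans hBC : B \ A ⊆ C) hBC
  have hfin₃ := hfin (sdiff_subset : C \ B ⊆ C) (hAB.trans hBC)
  rw [hdecomp, measureReal_union hdisj₂ ((hC.diff hB).prod hA),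
    measureReal_union hdisj₁ ((hB.diff hA).prod hB)]
  simp only [measureReal_prod_prod]
  rw [measureReal_sdiff hAB hA, measureReal_sdiff hBC hB]
  ring

section Module

variable {E : Type*} [AddCommGroup E] [Module ℝ E] {K : Set E}

theorem smul_subset_smul_of_zero_mem {r s : ℝ} (hK : Convex ℝ K) (h0 : 0 ∈ K) (hr : 0 ≤ r)
    (hrs : r ≤ s) : r • K ⊆ s • K := by
  rw [← sub_add_cancel s r, hK.add_smul (sub_nonneg.2 hrs) hr]
  exact subset_add_right _ (zero_mem_smul_set h0)

theorem staircase_subset {l : ℝ} (hK : Convex ℝ K) (h0 : 0 ∈ K) (hl : 1 / 2 ≤ l) (hl1 : l ≤ 1) :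
    ((2 * l - 1) • K) ×ˢ K ∪ (l • K) ×ˢ (l • K) ∪ K ×ˢ ((2 * l - 1) • K) ⊆
      K ×ˢ K ∩ {p | p.1 + p.2 ∈ (2 * l) • K} := by
  have hsub {r : ℝ} (hr : 0 ≤ r) (hr1 : r ≤ 1) : r • K ⊆ K := by
    simpa using smul_subset_smul_of_zero_mem hK h0 hr hr1
  have hsum {r s : ℝ} (hr : 0 ≤ r) (hr1 : r ≤ 1) (hs : 0 ≤ s) (hs1 : s ≤ 1) (hrs : r + s = 2 * l) :
      (r • K) ×ˢ (s • K) ⊆ K ×ˢ K ∩ {p | p.1 + p.2 ∈ (2 * l) • K} := fun p hp ↦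
    ⟨⟨hsub hr hr1 hp.1, hsub hs hs1 hp.2⟩, by
      rw [Set.mem_ofPred_eq, ← hrs, hK.add_smul hr hs]
      exact Set.add_mem_add hp.1 hp.2⟩
  refine union_subset (union_subset ?_ ?_) ?_
  · simpa using hsum (r := 2 * l - 1) (s := 1) (by linarith) (by linarith)
      (by simp) le_rfl (by ring)
  · exact hsum (by linarith) hl1 (by linarith) hl1 (by ring)
  · simpa using hsum (r := 1) (s := 2 * l - 1) (by simp) le_rfl
      (by linarith) (by linarith) (by ring)

end Module

section Haar

variable {E : Type*} [NormedAddCommGroup E] [NormedSpace ℝ E] [FiniteDimensional ℝ E]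
  [MeasurableSpace E] [BorelSpace E] (μ : Measure E) [μ.IsAddHaarMeasure] {K : Set E} {l : ℝ}

theorem exists_staircaseRatio_mul_le_of_zero_mem (hK : IsConvexBody K) (h0 : 0 ∈ K)
    (hl : 1 / 2 < l) (hl1 : l ≤ 1) :
    ∃ c, staircaseRatio (finrank ℝ E) l * μ.real K ≤ μ.real (symmCore K c) := by
  have hKpos := hK.measureReal_pos μ
  have hW : IsCompact ((2 * l) • K) := hK.1.smul (2 * l)
  have hWvol : μ.real ((2 * l) • K) = (2 * l) ^ finrank ℝ E * μ.real K :=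
    measureReal_smul μ (by linarith) K
  have hW0 : μ ((2 * l) • K) ≠ 0 := (measureReal_ne_zero_iff hW.measure_ne_top).1 <| by
    rw [hWvol]
    positivity
  obtain ⟨t, ht⟩ := exists_measureReal_prod_div_le hK.1.measurableSet hK.1.measurableSet
    hW.measurableSet hK.1.measure_ne_top hW0 hW.measure_ne_top
  have hcore : μ.real (symmCore K ((2⁻¹ : ℝ) • t)) = μ.real (K ∩ (t +ᵥ -K)) := by
    have hdouble : (2⁻¹ : ℝ) • t + (2⁻¹ : ℝ) • t = t := by rw [← add_smul]; norm_num
    rw [← hdouble, ← vadd_symmCore, hdouble]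
    simp [Measure.real]
  have hstair := measureReal_mono (μ := μ.prod μ) (staircase_subset hK.2.1 h0 hl.le hl1)
    (measure_ne_top_of_subset inter_subset_left (hK.1.prod hK.1).measure_ne_top)
  rw [measureReal_prod_staircase (hK.1.smul _).measurableSet (hK.1.smul l).measurableSet
    hK.1.measurableSet (smul_subset_smul_of_zero_mem hK.2.1 h0 (by linarith) (by linarith))
    (by simpa using smul_subset_smul_of_zero_mem hK.2.1 h0 (by linarith) hl1) hK.1.measure_ne_top,
    measureReal_smul μ (by linarith), measureReal_smul μ (by linarith)] at hstair
  refine ⟨(2⁻¹ : ℝ) • t, ?_⟩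
  rw [hcore]
  refine le_trans ?_ ht
  rw [hWvol, le_div_iff₀ (by positivity)]
  refine le_trans (le_of_eq ?_) hstair
  unfold staircaseRatio
  field_simp

theorem exists_staircaseRatio_mul_le (hK : IsConvexBody K) (hl : 1 / 2 < l) (hl1 : l ≤ 1) :
    ∃ c, staircaseRatio (finrank ℝ E) l * μ.real K ≤ μ.real (symmCore K c) := by
  obtain ⟨x, hx⟩ := hK.nonempty
  obtain ⟨c, hc⟩ := exists_staircaseRatio_mul_le_of_zero_mem μ (hK.vadd (-x))
    ⟨x, hx, neg_add_cancel x⟩ hl hl1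
  refine ⟨x + c, ?_⟩
  simpa [symmCore_vadd, Measure.real] using hc

theorem le_one_of_mul_measureReal_le_symmCore {g : ℝ} {c : E} (hK : IsConvexBody K)
    (hg : g * μ.real K ≤ μ.real (symmCore K c)) : g ≤ 1 := by
  refine le_of_mul_le_mul_right ?_ (hK.measureReal_pos μ)
  calc g * μ.real K ≤ μ.real (symmCore K c) := hg
    _ ≤ μ.real (-c +ᵥ K) := measureReal_mono inter_subset_left (hK.1.vadd (-c)).measure_ne_top
    _ = 1 * μ.real K := by simp [Measure.real]

theorem measureReal_add_smul_symmCore_le {s : ℝ} (hKc : IsCompact K) (hK : Convex ℝ K) (c : E)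
    (hs : 0 ≤ s) : μ.real (K + s • symmCore K c) ≤ (1 + s) ^ finrank ℝ E * μ.real K := by
  calc μ.real (K + s • symmCore K c) ≤ μ.real (-(s • c) +ᵥ (1 + s) • K) :=
        measureReal_mono (add_smul_symmCore_subset hK c hs)
          ((hKc.smul (1 + s)).vadd _).measure_ne_top
    _ = μ.real ((1 + s) • K) := by simp [Measure.real]
    _ = (1 + s) ^ finrank ℝ E * μ.real K := measureReal_smul μ (by linarith) K

theorem mul_pow_le_measureReal_smul_symmCore_div {g r s : ℝ} {c : E} (hK : IsConvexBody K)
    (hg0 : 0 < g) (hg : g * μ.real K ≤ μ.real (symmCore K c)) (hr : 0 ≤ r) (hs : 0 ≤ s) :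
    g * (r / (1 + s)) ^ finrank ℝ E ≤
      μ.real (r • symmCore K c) / μ.real (K + s • symmCore K c) := by
  have hKpos := hK.measureReal_pos μ
  have hne : (symmCore K c).Nonempty := nonempty_of_measureReal_ne_zero
    ((mul_pos hg0 hKpos).trans_le hg).ne'
  have hsum : 0 < μ.real (K + s • symmCore K c) := by
    rw [add_comm]
    exact hKpos.trans_le (measureReal_le_measureReal_add hne.smul_set
      (((isCompact_symmCore hK.1 c).smul s).add hK.1).measure_ne_top)
  rw [le_div_iff₀ hsum, measureReal_smul μ hr]
  calc g * (r / (1 + s)) ^ finrank ℝ E * μ.real (K + s • symmCore K c)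
      ≤ g * (r / (1 + s)) ^ finrank ℝ E * ((1 + s) ^ finrank ℝ E * μ.real K) := by
        gcongr
        exact measureReal_add_smul_symmCore_le μ hK.1 hK.2.1 c hs
    _ = r ^ finrank ℝ E * (g * μ.real K) := by
        rw [div_pow]
        field_simp
    _ ≤ r ^ finrank ℝ E * μ.real (symmCore K c) := by gcongr

theorem measureReal_add_smul_symmCore_div_le {g s : ℝ} {c : E} (hK : IsConvexBody K)
    (hg0 : 0 < g) (hg : g * μ.real K ≤ μ.real (symmCore K c)) (hs : 0 < s) :
    μ.real (K + s • symmCore K c) / μ.real (s • symmCore K c) ≤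
      ((1 + s) / s) ^ finrank ℝ E / g := by
  have h := mul_pow_le_measureReal_smul_symmCore_div μ hK hg0 hg hs.le hs.le
  calc μ.real (K + s • symmCore K c) / μ.real (s • symmCore K c)
      = (μ.real (s • symmCore K c) / μ.real (K + s • symmCore K c))⁻¹ := (inv_div _ _).symm
    _ ≤ (g * (s / (1 + s)) ^ finrank ℝ E)⁻¹ := inv_anti₀ (by positivity) h
    _ = ((1 + s) / s) ^ finrank ℝ E / g := by
      rw [mul_inv, ← inv_pow, inv_div, inv_mul_eq_div]

end Haar

end Staircase

section CoveringNumber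

variable {V : Type*} [NormedAddCommGroup V] [NormedSpace ℝ V] {K : Set V} {lam : ℝ}

theorem coversWith_card {T : Finset V} (h : K ⊆ ↑T + lam • K) : CoversWith K lam T.card := by
  refine ⟨fun i ↦ T.equivFin.symm i, fun x hx ↦ ?_⟩
  obtain ⟨t, ht, _, ⟨y, hy, rfl⟩, rfl⟩ := h hx
  exact mem_iUnion.2 ⟨T.equivFin ⟨t, ht⟩, y, hy, by simp [add_comm]⟩

theorem covN_le_card {T : Finset V} (h : K ⊆ ↑T + lam • K) : covN lam K ≤ T.card :=
  Nat.sInf_le (coversWith_card h)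

theorem covN_le_card_of_subset_add_smul_symmCore {T : Finset V} {c : V}
    (h : K ⊆ ↑T + lam • symmCore K c) : covN lam K ≤ T.card := by
  classical
  have hcore : lam • symmCore K c ⊆ {-(lam • c)} + lam • K := by
    rintro _ ⟨u, hu, rfl⟩
    exact ⟨-(lam • c), rfl, lam • (c + u), ⟨c + u, (mem_symmCore.1 hu).1, rfl⟩, by simp⟩
  have hcover : K ⊆ ↑(T + {-(lam • c)}) + lam • K := by
    rw [Finset.coe_add, Finset.coe_singleton, add_assoc]
    exact h.trans (add_subset_add_left hcore)
  exact (covN_le_card hcover).trans (Finset.card_add_singleton T _).le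

theorem coversWith_covN (hK : IsCompact K) (hint : (interior K).Nonempty) (hlam : lam ≠ 0) :
    CoversWith K lam (covN lam K) := by
  classical
  have hint' : (interior (lam • K)).Nonempty := by
    rw [interior_smul₀ hlam]
    exact hint.smul_set
  obtain ⟨T, hT⟩ := compact_covered_by_add_left_translates hK hint'
  have hcover : K ⊆ ↑(-T) + lam • K := fun x hx ↦ by
    obtain ⟨t, ht, htx⟩ := mem_iUnion₂.1 (hT hx)
    exact ⟨-t, by simpa using ht, t + x, htx, neg_add_cancel_left t x⟩
  exact Nat.sInf_mem (s := {m | CoversWith K lam m}) ⟨(-T).card, coversWith_card hcover⟩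

theorem coin_le_covN_div (hK : IsCompact K) (hint : (interior K).Nonempty) (hlam0 : 0 < lam)
    (hlam : lam ≤ 1 / 2) : coin K ≤ covN lam K / (1 - lam) := by
  have hcov := coversWith_covN hK hint hlam0.ne'
  have hpos : 0 < covN lam K := by
    obtain ⟨x, hx⟩ := hint
    obtain ⟨t, ht⟩ := hcov
    obtain ⟨i, -⟩ := mem_iUnion.1 (ht (interior_subset hx))
    exact i.pos
  have hgamma : gammaC (covN lam K) K ≤ lam :=
    csInf_le ⟨0, fun _ h ↦ h.1.le⟩ ⟨hlam0, hcov⟩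
  calc coin K ≤ covN lam K / (1 - gammaC (covN lam K) K) := by
        refine csInf_le ⟨0, ?_⟩ ⟨_, hpos, hgamma.trans hlam, rfl⟩
        rintro _ ⟨m, -, hm, rfl⟩
        exact div_nonneg m.cast_nonneg (by linarith)
    _ ≤ covN lam K / (1 - lam) := by gcongr; linarith

end CoveringNumber

section CoveringBound

theorem ceil_add_mul_one_sub_inv_pow_le {A B x : ℝ} (hA : 1 ≤ A) (hx : 0 ≤ x)
    (hB : B ≤ A * Real.exp x) :
    ⌈A * x⌉₊ + B * (1 - A⁻¹) ^ ⌈A * x⌉₊ ≤ A * (x + 1) + 1 := by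
  have hA0 : 0 < A := by linarith
  have hceil : x ≤ A⁻¹ * ⌈A * x⌉₊ := by
    rw [inv_mul_eq_div, le_div_iff₀' hA0]
    exact Nat.le_ceil _
  have hbase : 0 ≤ 1 - A⁻¹ := sub_nonneg.2 (inv_le_one_of_one_le₀ hA)
  have hpow : (1 - A⁻¹) ^ ⌈A * x⌉₊ ≤ Real.exp (-x) :=
    calc (1 - A⁻¹) ^ ⌈A * x⌉₊ ≤ Real.exp (-A⁻¹) ^ ⌈A * x⌉₊ := by
          gcongr
          exact Real.one_sub_le_exp_neg A⁻¹
      _ = Real.exp (-(A⁻¹ * ⌈A * x⌉₊)) := by rw [← Real.exp_nat_mul]; ring_nf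
      _ ≤ Real.exp (-x) := by gcongr
  have hresidual : B * (1 - A⁻¹) ^ ⌈A * x⌉₊ ≤ A :=
    calc B * (1 - A⁻¹) ^ ⌈A * x⌉₊ ≤ A * Real.exp x * Real.exp (-x) := by gcongr
      _ = A := by rw [mul_assoc, ← Real.exp_add, add_neg_cancel, Real.exp_zero, mul_one]
  linarith [Nat.ceil_lt_add_one (mul_nonneg hA0.le hx)]

variable {E : Type*} [NormedAddCommGroup E] [NormedSpace ℝ E] [FiniteDimensional ℝ E]
  [MeasurableSpace E] [BorelSpace E] (μ : Measure E) [μ.IsAddHaarMeasure] {K : Set E} {c : E}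
  {g lam η : ℝ}

theorem covN_le_of_symmCore (hK : IsConvexBody K) (hg0 : 0 < g)
    (hg : g * μ.real K ≤ μ.real (symmCore K c)) (hlam : 0 < lam) (hη0 : 0 < η) (hη : η ≤ 1 / 2)
    (M : ℕ) :
    covN lam K ≤ M + ((1 + η * lam) / (η * lam)) ^ finrank ℝ E / g *
      (1 - g * ((1 - η) * lam / (1 + lam)) ^ finrank ℝ E) ^ M := by
  set L := symmCore K c
  have hL : IsCompact L := isCompact_symmCore hK.1 c
  have hLpos : 0 < μ.real L := (mul_pos hg0 (hK.measureReal_pos μ)).trans_le hg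
  have hlamL : IsCompact (lam • L) := hL.smul lam
  have hlamL_abs : AbsConvex ℝ (lam • L) :=
    (absConvex_symmCore hK.2.1 c).imp (·.smul lam) (·.smul lam)
  have hη1 : 0 ≤ 1 - η := by linarith
  have hlamL0 : μ (lam • L) ≠ 0 := (measureReal_ne_zero_iff hlamL.measure_ne_top).1 <| by
    rw [measureReal_smul μ hlam.le]
    positivity
  obtain ⟨T, hT, hTcard⟩ := exists_finset_subset_add_card_le μ hK.1 hK.nonempty hlamL
    hlamL_abs hlamL0 hη0 hη M
  have hpack : μ.real (K + η • lam • L) / μ.real (η • lam • L) ≤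
      ((1 + η * lam) / (η * lam)) ^ finrank ℝ E / g := by
    rw [smul_smul]
    exact measureReal_add_smul_symmCore_div_le μ hK hg0 hg (mul_pos hη0 hlam)
  have hgreedy : g * ((1 - η) * lam / (1 + lam)) ^ finrank ℝ E ≤
      μ.real ((1 - η) • lam • L) / μ.real (K + lam • L) := by
    rw [smul_smul]
    exact mul_pow_le_measureReal_smul_symmCore_div μ hK hg0 hg (by positivity) hlam.le
  have hbase : 0 ≤ 1 - μ.real ((1 - η) • lam • L) / μ.real (K + lam • L) :=
    sub_nonneg.2 (div_le_one_of_le₀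
      (measureReal_smul_le_measureReal_add μ hK.1 hK.nonempty hlamL hη1 (by linarith))
      measureReal_nonneg)
  calc (covN lam K : ℝ) ≤ T.card := by exact_mod_cast covN_le_card_of_subset_add_smul_symmCore hT
    _ ≤ _ := hTcard.trans (by gcongr)

theorem covN_le_pow_div_of_symmCore (hK : IsConvexBody K) (hg0 : 0 < g)
    (hg : g * μ.real K ≤ μ.real (symmCore K c)) (hlam : 0 < lam) :
    covN lam K ≤ (1 + 2 / lam) ^ finrank ℝ E / g := by
  have h := covN_le_of_symmCore μ hK hg0 hg hlam (η := 1 / 2) (by norm_num) le_rfl 0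
  have hratio : (1 + 1 / 2 * lam) / (1 / 2 * lam) = 1 + 2 / lam := by field_simp; ring
  rwa [hratio, pow_zero, mul_one, Nat.cast_zero, zero_add] at h

theorem covN_le_of_symmCore_of_le_exp {l : ℝ} (hK : IsConvexBody K) (hg0 : 0 < g)
    (hg : g * μ.real K ≤ μ.real (symmCore K c)) (hlam : 0 < lam) (hη0 : 0 < η) (hη : η ≤ 1 / 2)
    (hl : 0 ≤ l) (hexp : (1 + η * lam) * (1 - η) / (η * (1 + lam)) ≤ Real.exp l) :
    covN lam K ≤ ((1 + lam) / ((1 - η) * lam)) ^ finrank ℝ E / g * (finrank ℝ E * l + 1) + 1 := by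
  have hη1 : 0 < 1 - η := by linarith
  set n := finrank ℝ E
  set A := ((1 + lam) / ((1 - η) * lam)) ^ n / g with hA
  have hA1 : 1 ≤ A := by
    rw [hA, le_div_iff₀ hg0, one_mul]
    refine (le_one_of_mul_measureReal_le_symmCore μ hK hg).trans (one_le_pow₀ ?_)
    rw [le_div_iff₀ (by positivity)]
    nlinarith
  have hAinv : g * ((1 - η) * lam / (1 + lam)) ^ n = A⁻¹ := by
    rw [hA, inv_div, div_eq_mul_inv g, ← inv_pow, inv_div]
  have hB : ((1 + η * lam) / (η * lam)) ^ n / g ≤ A * Real.exp (n * l) :=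
    calc ((1 + η * lam) / (η * lam)) ^ n / g
        = A * ((1 + η * lam) * (1 - η) / (η * (1 + lam))) ^ n := by
          rw [hA, div_mul_eq_mul_div, ← mul_pow]
          congr 2
          field_simp
      _ ≤ A * Real.exp l ^ n := by gcongr
      _ = A * Real.exp (n * l) := by rw [Real.exp_nat_mul]
  have hcov := covN_le_of_symmCore μ hK hg0 hg hlam hη0 hη ⌈A * (n * l)⌉₊
  rw [hAinv] at hcov
  exact hcov.trans (ceil_add_mul_one_sub_inv_pow_le hA1 (by positivity) hB)

end CoveringBound

section Rogers

/-- The factor `log n + log (log n) + 5` of Rogers' bound on covering densities. -/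
noncomputable def rogersFactor (n : ℕ) : ℝ := Real.log n + Real.log (Real.log n) + 5

theorem one_lt_log {n : ℕ} (hn : 3 ≤ n) : 1 < Real.log n := by
  have hn' : (3 : ℝ) ≤ n := by exact_mod_cast hn
  rw [Real.lt_log_iff_exp_lt (by linarith)]
  exact Real.exp_one_lt_three.trans_le hn'

/-- The shrinking parameter `η` of the packing step in Rogers' argument. This choice makes the
ratio of the packing bound to the greedy bound at most `(n * log n) ^ n`. -/
noncomputable def rogersScale (n : ℕ) : ℝ := 2 / (3 * (n * Real.log n))

theorem three_lt_mul_log {n : ℕ} (hn : 3 ≤ n) : 3 < n * Real.log n := by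
  have hn' : (3 : ℝ) ≤ n := by exact_mod_cast hn
  nlinarith [one_lt_log hn]

theorem rogersScale_pos {n : ℕ} (hn : 3 ≤ n) : 0 < rogersScale n := by
  have := three_lt_mul_log hn
  unfold rogersScale
  positivity

theorem rogersScale_le_half {n : ℕ} (hn : 3 ≤ n) : rogersScale n ≤ 1 / 2 := by
  have := three_lt_mul_log hn
  rw [rogersScale, div_le_div_iff₀ (by positivity) two_pos]
  linarith

theorem inv_one_sub_rogersScale_pow_le {n : ℕ} (hn : 3 ≤ n) :
    ((1 - rogersScale n) ^ n)⁻¹ ≤ 1 + 2 / (3 * Real.log n - 2) := by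
  have hL := one_lt_log hn
  have : (3 : ℝ) ≤ n := by exact_mod_cast hn
  have hbernoulli : 1 - 2 / (3 * Real.log n) ≤ (1 - rogersScale n) ^ n := by
    have h := one_add_mul_le_pow (a := -rogersScale n) (by linarith [rogersScale_le_half hn]) n
    have hmul : (n : ℝ) * -rogersScale n = -(2 / (3 * Real.log n)) := by
      rw [rogersScale]
      field_simp
    rwa [hmul, ← sub_eq_add_neg, ← sub_eq_add_neg] at h
  have hL3 : 1 + 2 / (3 * Real.log n - 2) = (1 - 2 / (3 * Real.log n))⁻¹ := by
    have : 3 * Real.log n - 2 ≠ 0 := by linarith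
    field_simp
    ring
  rw [hL3]
  exact inv_anti₀ (by rw [sub_pos, div_lt_one (by positivity)]; linarith) hbernoulli

theorem inv_one_sub_rogersScale_pow_mul_add_one_le {n : ℕ} (hn : 3 ≤ n) :
    ((1 - rogersScale n) ^ n)⁻¹ * (n * (Real.log n + Real.log (Real.log n)) + 1) + 1 ≤
      n * rogersFactor n := by
  have hL := one_lt_log hn
  have hn' : (3 : ℝ) ≤ n := by exact_mod_cast hn
  have hinv := inv_one_sub_rogersScale_pow_le hn
  unfold rogersFactor
  set L := Real.log n
  have hlogL0 : 0 ≤ Real.log L := Real.log_nonneg hL.le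
  have hlogL : Real.log L ≤ L - 1 := Real.log_le_sub_one_of_pos (by linarith)
  have hL2 : 0 < 3 * L - 2 := by linarith
  have hlinear : 2 / (3 * L - 2) * (L + Real.log L) ≤ 2 := by
    rw [div_mul_eq_mul_div, div_le_iff₀ hL2]
    linarith
  have hconst : 2 / (3 * L - 2) ≤ 2 := by rw [div_le_iff₀ hL2]; linarith
  calc ((1 - rogersScale n) ^ n)⁻¹ * (n * (L + Real.log L) + 1) + 1
      ≤ (1 + 2 / (3 * L - 2)) * (n * (L + Real.log L) + 1) + 1 := by gcongr
    _ = n * (L + Real.log L + 2 / (3 * L - 2) * (L + Real.log L)) + 2 / (3 * L - 2) + 2 := by ring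
    _ ≤ n * (L + Real.log L + 2) + 2 + 2 := by gcongr
    _ ≤ n * (L + Real.log L + 5) := by linarith

theorem one_add_mul_mul_one_sub_div_le {η lam : ℝ} (hη0 : 0 < η) (hη : η ≤ 1 / 2)
    (hlam : 1 / 2 ≤ lam) : (1 + η * lam) * (1 - η) / (η * (1 + lam)) ≤ 2 / (3 * η) := by
  rw [div_le_div_iff₀ (by positivity) (by positivity)]
  have : (1 + η * lam) * (1 - η) * 3 ≤ 2 * (1 + lam) := by
    nlinarith [mul_nonneg hη0.le (sub_nonneg.2 hlam)]
  nlinarith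

theorem one_add_rogersScale_mul_div_le_exp {n : ℕ} {lam : ℝ} (hn : 3 ≤ n) (hlam : 1 / 2 ≤ lam) :
    (1 + rogersScale n * lam) * (1 - rogersScale n) / (rogersScale n * (1 + lam)) ≤
      Real.exp (Real.log n + Real.log (Real.log n)) := by
  have hL := one_lt_log hn
  have := three_lt_mul_log hn
  calc (1 + rogersScale n * lam) * (1 - rogersScale n) / (rogersScale n * (1 + lam))
      ≤ 2 / (3 * rogersScale n) :=
        one_add_mul_mul_one_sub_div_le (rogersScale_pos hn) (rogersScale_le_half hn) hlam
    _ = n * Real.log n := by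
        rw [rogersScale]
        field_simp
    _ = Real.exp (Real.log n + Real.log (Real.log n)) := by
        rw [Real.exp_add, Real.exp_log (by positivity), Real.exp_log (by linarith)]

theorem covN_le_rogersFactor {E : Type*} [NormedAddCommGroup E] [NormedSpace ℝ E]
    [FiniteDimensional ℝ E] [MeasurableSpace E] [BorelSpace E] (μ : Measure E)
    [μ.IsAddHaarMeasure] {K : Set E} {c : E} {g lam : ℝ} (hE : 3 ≤ finrank ℝ E)
    (hK : IsConvexBody K) (hg0 : 0 < g) (hg : g * μ.real K ≤ μ.real (symmCore K c))
    (hlam : 1 / 2 ≤ lam) :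
    covN lam K ≤ (1 + 1 / lam) ^ finrank ℝ E / g * (finrank ℝ E * rogersFactor (finrank ℝ E)) := by
  have hlam0 : 0 < lam := by linarith
  have hL := one_lt_log hE
  have hlogL : 0 ≤ Real.log (Real.log (finrank ℝ E)) := Real.log_nonneg hL.le
  have hη2 := rogersScale_le_half hE
  have hcov := covN_le_of_symmCore_of_le_exp μ hK hg0 hg hlam0 (rogersScale_pos hE) hη2
    (by linarith) (one_add_rogersScale_mul_div_le_exp hE hlam)
  have hfactor := inv_one_sub_rogersScale_pow_mul_add_one_le hE
  set n := finrank ℝ E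
  set η := rogersScale n
  set l := Real.log n + Real.log (Real.log n)
  have hone : 1 ≤ (1 + 1 / lam) ^ n / g := by
    rw [le_div_iff₀ hg0, one_mul]
    exact (le_one_of_mul_measureReal_le_symmCore μ hK hg).trans (one_le_pow₀ (by simp [hlam0.le]))
  have hsplit : ((1 + lam) / ((1 - η) * lam)) ^ n = (1 + 1 / lam) ^ n * ((1 - η) ^ n)⁻¹ := by
    rw [← inv_pow, ← mul_pow]
    congr 1
    have : 1 - η ≠ 0 := by linarith
    field_simp
    ring
  calc (covN lam K : ℝ) ≤ ((1 + lam) / ((1 - η) * lam)) ^ n / g * (n * l + 1) + 1 := hcov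
    _ ≤ (1 + 1 / lam) ^ n / g * (((1 - η) ^ n)⁻¹ * (n * l + 1)) + (1 + 1 / lam) ^ n / g := by
        rw [hsplit, mul_div_right_comm, mul_assoc]
        gcongr
    _ = (1 + 1 / lam) ^ n / g * (((1 - η) ^ n)⁻¹ * (n * l + 1) + 1) := by ring
    _ ≤ (1 + 1 / lam) ^ n / g * (n * rogersFactor n) := by gcongr

end Rogers

section Numerics

/-- The bound on `N_{1/2}(K)` for an arbitrary `d`-dimensional convex body `K`. -/
noncomputable def generalCoverBound (d : ℕ) : ℝ :=
  2 ^ d * ((Nat.choose (2 * d) d : ℝ) ^ ((1 : ℝ) / d) - 1 / 2) ^ d * d * rogersFactor d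

theorem mul_le_generalCoverBound {d : ℕ} {q s : ℝ} (hd : d ≠ 0) (hq : 1 / 2 ≤ q)
    (hqd : q ^ d ≤ Nat.choose (2 * d) d) (hs0 : 0 ≤ s) (hs : s ≤ rogersFactor d) :
    (2 * q - 1) ^ d * (d * s) ≤ generalCoverBound d := by
  have hroot : q ≤ (Nat.choose (2 * d) d : ℝ) ^ ((1 : ℝ) / d) := by
    rw [one_div, Real.le_rpow_inv_iff_of_pos (by linarith) (Nat.cast_nonneg _) (by positivity)]
    rwa [Real.rpow_natCast]
  have hdiff : 0 ≤ q - 1 / 2 := sub_nonneg.2 hq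
  have hdiff' := hdiff.trans (sub_le_sub_right hroot _)
  calc (2 * q - 1) ^ d * (d * s) = 2 ^ d * (q - 1 / 2) ^ d * d * s := by
        rw [← mul_pow]
        ring
    _ ≤ generalCoverBound d := by
        unfold generalCoverBound
        gcongr

theorem exp_div_pow {p q : ℕ} (hq : q ≠ 0) : Real.exp (p / q) ^ q = Real.exp 1 ^ p := by
  rw [← Real.exp_nat_mul, ← Real.exp_nat_mul]
  congr 1
  field_simp

theorem exp_div_le_of_pow_le_pow {p q : ℕ} {x : ℝ} (hq : q ≠ 0) (hx : 0 ≤ x)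
    (h : 2.7182818286 ^ p ≤ x ^ q) : Real.exp (p / q) ≤ x := by
  refine le_of_pow_le_pow_left₀ hq hx ?_
  rw [exp_div_pow hq]
  exact (pow_le_pow_left₀ (Real.exp_pos 1).le Real.exp_one_lt_d9.le p).trans h

theorem le_exp_div_of_pow_le_pow {p q : ℕ} {x : ℝ} (hq : q ≠ 0)
    (h : x ^ q ≤ 2.7182818283 ^ p) : x ≤ Real.exp (p / q) := by
  refine le_of_pow_le_pow_left₀ hq (Real.exp_pos _).le ?_
  rw [exp_div_pow hq]
  exact h.trans (pow_le_pow_left₀ (by norm_num) Real.exp_one_gt_d9.le p)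

theorem add_add_five_le_rogersFactor {n : ℕ} {a b : ℝ} (ha : Real.exp a ≤ n)
    (hb : Real.exp b ≤ a) : a + b + 5 ≤ rogersFactor n := by
  have hlog : a ≤ Real.log n := (Real.le_log_iff_exp_le ((Real.exp_pos a).trans_le ha)).2 ha
  have hloglog : b ≤ Real.log (Real.log n) :=
    (Real.le_log_iff_exp_le ((Real.exp_pos b).trans_le (hb.trans hlog))).2 (hb.trans hlog)
  unfold rogersFactor
  gcongr

theorem five_le_rogersFactor_two : 5 ≤ rogersFactor 2 := by
  have ha : Real.exp (2 / 3) ≤ 2 :=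
    mod_cast exp_div_le_of_pow_le_pow (p := 2) (q := 3) (by norm_num) (by norm_num) (by norm_num)
  have hb : Real.exp (-(1 / 2)) ≤ 2 / 3 := by
    have h := Real.add_one_le_exp (1 / 2)
    rw [Real.exp_neg, inv_le_comm₀ (Real.exp_pos _) (by norm_num)]
    linarith
  refine le_trans ?_ (add_add_five_le_rogersFactor (n := 2) ha hb)
  norm_num

theorem six_le_rogersFactor {n : ℕ} (hn : 3 ≤ n) : 6 ≤ rogersFactor n := by
  have hn' : (3 : ℝ) ≤ n := by exact_mod_cast hn
  have h := add_add_five_le_rogersFactor (n := n) (a := 1) (b := 0)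
    (Real.exp_one_lt_three.le.trans hn') (by simp)
  linarith

theorem rogersFactor_ge_of_six_le {n : ℕ} (hn : 6 ≤ n) : 7.3 ≤ rogersFactor n := by
  have hn' : (6 : ℝ) ≤ n := by exact_mod_cast hn
  have ha : Real.exp (7 / 4) ≤ 6 :=
    mod_cast exp_div_le_of_pow_le_pow (p := 7) (q := 4) (by norm_num) (by norm_num) (by norm_num)
  have hb : Real.exp (11 / 20) ≤ 7 / 4 :=
    mod_cast exp_div_le_of_pow_le_pow (p := 11) (q := 20) (by norm_num) (by norm_num) (by norm_num)
  linarith [add_add_five_le_rogersFactor (ha.trans hn') hb]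

theorem rogersFactor_ge_of_seven_le {n : ℕ} (hn : 7 ≤ n) : 7.5 ≤ rogersFactor n := by
  have hn' : (7 : ℝ) ≤ n := by exact_mod_cast hn
  have ha : Real.exp (19 / 10) ≤ 7 :=
    mod_cast exp_div_le_of_pow_le_pow (p := 19) (q := 10) (by norm_num) (by norm_num) (by norm_num)
  have hb : Real.exp (3 / 5) ≤ 19 / 10 :=
    mod_cast exp_div_le_of_pow_le_pow (p := 3) (q := 5) (by norm_num) (by norm_num) (by norm_num)
  linarith [add_add_five_le_rogersFactor (ha.trans hn') hb]

theorem packing_bound_le_generalCoverBound {d : ℕ} (hd2 : 2 ≤ d) (hd6 : d ≤ 6) :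
    5 ^ d / staircaseRatio d (19 / 20) ≤ generalCoverBound d := by
  -- The values of `q` are rational lower approximations of `C(2d,d)^(1/d)`.
  interval_cases d
  · refine le_trans ?_ (mul_le_generalCoverBound (q := 2.4) (s := 5) (by norm_num) (by norm_num)
      (by norm_num [Nat.choose]) (by norm_num) five_le_rogersFactor_two)
    norm_num [staircaseRatio]
  · refine le_trans ?_ (mul_le_generalCoverBound (q := 8 / 3) (s := 6) (by norm_num) (by norm_num)
      (by norm_num [Nat.choose]) (by norm_num) (six_le_rogersFactor (by norm_num)))
    norm_num [staircaseRatio]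
  · refine le_trans ?_ (mul_le_generalCoverBound (q := 20 / 7) (s := 6) (by norm_num) (by norm_num)
      (by norm_num [Nat.choose]) (by norm_num) (six_le_rogersFactor (by norm_num)))
    norm_num [staircaseRatio]
  · refine le_trans ?_ (mul_le_generalCoverBound (q := 3) (s := 6) (by norm_num) (by norm_num)
      (by norm_num [Nat.choose]) (by norm_num) (six_le_rogersFactor (by norm_num)))
    norm_num [staircaseRatio]
  · refine le_trans ?_ (mul_le_generalCoverBound (q := 3.118) (s := 7.3) (by norm_num) (by norm_num)
      (by norm_num [Nat.choose]) (by norm_num) (rogersFactor_ge_of_six_le le_rfl))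
    norm_num [staircaseRatio]

theorem greedy_bound_le_generalCoverBound {d : ℕ} (hd7 : 7 ≤ d) (hd14 : d ≤ 14) :
    (60 / 19) ^ d / staircaseRatio d (19 / 20) * (d * (18 / 7) + 1) + 1 ≤ generalCoverBound d := by
  -- `4 - 9.7 / (d + 5)` was fitted numerically to `C(2d,d)^(1/d)` on `7 ≤ d ≤ 14`.
  have hqd : (4 - 9.7 / (d + 5) : ℝ) ^ d ≤ Nat.choose (2 * d) d := by
    interval_cases d <;> norm_num [Nat.choose]
  have hq : 1 / 2 ≤ (4 - 9.7 / (d + 5) : ℝ) := by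
    interval_cases d <;> norm_num
  refine le_trans ?_ (mul_le_generalCoverBound (by lia) hq hqd (by norm_num)
    (rogersFactor_ge_of_seven_le hd7))
  interval_cases d <;> norm_num [staircaseRatio]

-- `15` is the least exponent for which this holds. The base `7 / 2` is the value of `q` for which
-- `(2 * q - 1) ^ d` is `6 ^ d`, the leading factor obtained from a core with ratio `1 / 2 ^ d`.
theorem pow_le_choose_two_mul {d : ℕ} (hd : 15 ≤ d) :
    (7 / 2 : ℝ) ^ d ≤ Nat.choose (2 * d) d := by
  induction d, hd using Nat.le_induction with
  | base => norm_num [Nat.choose]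
  | succ n hn ih =>
    have hrec : ((n : ℝ) + 1) * Nat.choose (2 * (n + 1)) (n + 1) =
        2 * (2 * n + 1) * Nat.choose (2 * n) n := by
      exact_mod_cast Nat.succ_mul_centralBinom_succ n
    have hn' : (15 : ℝ) ≤ n := by exact_mod_cast hn
    refine le_of_mul_le_mul_left ?_ (show (0 : ℝ) < n + 1 by positivity)
    calc ((n : ℝ) + 1) * (7 / 2) ^ (n + 1) = (7 / 2 * (n + 1)) * (7 / 2) ^ n := by ring
      _ ≤ 2 * (2 * n + 1) * Nat.choose (2 * n) n :=
          mul_le_mul (by linarith) ih (by positivity) (by positivity)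
      _ = (n + 1) * Nat.choose (2 * (n + 1)) (n + 1) := hrec.symm

end Numerics

section HalfCover

variable {E : Type*} [NormedAddCommGroup E] [NormedSpace ℝ E] [FiniteDimensional ℝ E] {K : Set E}

theorem covN_half_le_of_eq_neg (hE : 2 ≤ finrank ℝ E) (hK : IsConvexBody K) (hsymm : K = -K) :
    covN (1 / 2) K ≤ 3 ^ finrank ℝ E * (finrank ℝ E * rogersFactor (finrank ℝ E)) := by
  borelize E
  let μ : Measure E := Measure.addHaar
  have hcore : 1 * μ.real K ≤ μ.real (symmCore K 0) := by
    rw [one_mul, symmCore_zero_of_eq_neg hsymm]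
  obtain hE2 | hE3 := hE.eq_or_lt
  · have h := covN_le_pow_div_of_symmCore μ hK one_pos hcore (lam := 1 / 2) (by norm_num)
    rw [← hE2] at h ⊢
    push_cast
    linarith [five_le_rogersFactor_two]
  · have h := covN_le_rogersFactor μ hE3 hK one_pos hcore le_rfl
    norm_num at h ⊢
    exact h

theorem covN_half_le_of_lt_fifteen (hE2 : 2 ≤ finrank ℝ E) (hE15 : finrank ℝ E < 15)
    (hK : IsConvexBody K) : covN (1 / 2) K ≤ generalCoverBound (finrank ℝ E) := by
  borelize E
  let μ : Measure E := Measure.addHaar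
  obtain ⟨c, hc⟩ := exists_staircaseRatio_mul_le μ hK (l := 19 / 20) (by norm_num) (by norm_num)
  have hg := staircaseRatio_pos (d := finrank ℝ E) (l := 19 / 20) (by norm_num) (by norm_num)
  obtain hE6 | hE7 := le_or_gt (finrank ℝ E) 6
  · have h := covN_le_pow_div_of_symmCore μ hK hg hc (lam := 1 / 2) (by norm_num)
    norm_num at h ⊢
    exact h.trans (packing_bound_le_generalCoverBound hE2 hE6)
  · have hexp : (1 + 1 / 20 * (1 / 2)) * (1 - 1 / 20) / (1 / 20 * (1 + 1 / 2)) ≤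
        Real.exp (18 / 7) :=
      mod_cast le_exp_div_of_pow_le_pow (p := 18) (q := 7) (by norm_num) (by norm_num)
    have h := covN_le_of_symmCore_of_le_exp μ hK hg hc (by norm_num) (by norm_num) (by norm_num)
      (by norm_num) hexp
    norm_num at h ⊢
    exact h.trans (greedy_bound_le_generalCoverBound hE7 (by lia))

theorem covN_half_le_of_fifteen_le (hE : 15 ≤ finrank ℝ E) (hK : IsConvexBody K) :
    covN (1 / 2) K ≤ generalCoverBound (finrank ℝ E) := by
  borelize E
  let μ : Measure E := Measure.addHaar
  obtain ⟨c, hc⟩ := exists_staircaseRatio_mul_le μ hK (l := 1) (by norm_num) le_rfl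
  rw [staircaseRatio_one] at hc
  calc (covN (1 / 2) K : ℝ)
      ≤ (1 + 1 / (1 / 2)) ^ finrank ℝ E / (1 / 2 ^ finrank ℝ E) *
          (finrank ℝ E * rogersFactor (finrank ℝ E)) :=
        covN_le_rogersFactor μ (by lia) hK (by positivity) hc le_rfl
    _ = (2 * (7 / 2) - 1) ^ finrank ℝ E * (finrank ℝ E * rogersFactor (finrank ℝ E)) := by
        rw [div_div_eq_mul_div, div_one, ← mul_pow]
        norm_num
    _ ≤ generalCoverBound (finrank ℝ E) :=
        mul_le_generalCoverBound (by lia) (by norm_num) (pow_le_choose_two_mul hE)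
          (by linarith [six_le_rogersFactor (n := finrank ℝ E) (by lia)]) le_rfl

theorem coin_upper_bounds_general (hE : 2 ≤ finrank ℝ E) (hK : IsConvexBody K) :
    coin K ≤ 2 * (covN (1 / 2 : ℝ) K : ℝ) ∧
    (K = -K →
      2 * (covN (1 / 2 : ℝ) K : ℝ) ≤
        3 ^ finrank ℝ E * (2 * finrank ℝ E) *
          (Real.log (finrank ℝ E) + Real.log (Real.log (finrank ℝ E)) + 5)) ∧
    2 * (covN (1 / 2 : ℝ) K : ℝ) ≤
      2 ^ (finrank ℝ E + 1) *
        (((Nat.choose (2 * finrank ℝ E) (finrank ℝ E) : ℝ) ^ ((1 : ℝ) / finrank ℝ E) - 1 / 2) ^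
          finrank ℝ E) * finrank ℝ E *
        (Real.log (finrank ℝ E) + Real.log (Real.log (finrank ℝ E)) + 5) := by
  refine ⟨?_, fun hsymm ↦ ?_, ?_⟩
  · have h := coin_le_covN_div hK.1 hK.2.2 (lam := 1 / 2) (by norm_num) le_rfl
    exact h.trans_eq (by ring)
  · have h := covN_half_le_of_eq_neg hE hK hsymm
    unfold rogersFactor at h
    linarith
  · have h : (covN (1 / 2) K : ℝ) ≤ generalCoverBound (finrank ℝ E) :=
      (lt_or_ge (finrank ℝ E) 15).elim (covN_half_le_of_lt_fifteen hE · hK)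
        (covN_half_le_of_fifteen_le · hK)
    unfold generalCoverBound rogersFactor at h
    rw [pow_succ]
    linarith

end HalfCover

/-- Rogers-type upper bounds on the covering index. -/
theorem coin_upper_bounds (d : ℕ) (hd : 2 ≤ d) (K : Set (Fin d → ℝ))
    (hK : IsConvexBody K) :
    coin K ≤ 2 * (covN (1 / 2 : ℝ) K : ℝ) ∧
    (K = -K →
      2 * (covN (1 / 2 : ℝ) K : ℝ) ≤
        3 ^ d * (2 * d) * (Real.log d + Real.log (Real.log d) + 5)) ∧
    2 * (covN (1 / 2 : ℝ) K : ℝ) ≤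
      2 ^ (d + 1) * (((Nat.choose (2 * d) d : ℝ) ^ ((1 : ℝ) / d) - 1 / 2) ^ d) * d *
        (Real.log d + Real.log (Real.log d) + 5) := by
  simpa only [finrank_fin_fun] using coin_upper_bounds_general (by simpa using hd) hK
end

section
/- For every convex body K ⊆ ℝ^d, N_{1/2}(K) ≤ coin(K) ≤ 2·N_{1/2}(K), where N_{1/2}(K) = N(K, (1/2)K) is the smallest number of translates of (1/2)·K whose union contains K. -/
open Set Pointwise

/-!
The first inequality rests on `γ_m(K) ≤ 1/2 ↔ K is covered by m translates of (1/2)K`. Enlarging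
the ratio keeps a covering, because `λK + (μ - λ)k ⊆ μK` when `K` is star-shaped about `k`, so all
ratios above `γ_m(K)` admit a covering by `m` homothets. Translates that miss `K` may be discarded,
which confines the translation vectors to a compact set; hence the ratios admitting a covering form
a closed set, and the infimum is attained. So every `m` competing in `coin(K)` satisfies
`N_{1/2}(K) ≤ m ≤ m / (1 - γ_m(K))`, while `m = N_{1/2}(K)` competes with value at most `2m`.
-/

theorem smul_add_smul_mem_add_smul {𝕜 E : Type*} [Field 𝕜] [LinearOrder 𝕜]
    [IsStrictOrderedRing 𝕜] [AddCommGroup E] [Module 𝕜 E] {K : Set E} {x y : E} {a b : 𝕜}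
    (hstar : StarConvex 𝕜 x K) (hy : y ∈ K) (ha : 0 ≤ a) (hb : 0 ≤ b) (hab : 0 < a + b) :
    a • x + b • y ∈ (a + b) • K := by
  refine ⟨(a / (a + b)) • x + (b / (a + b)) • y, starConvex_iff_div.1 hstar hy ha hb hab, ?_⟩
  simp only [smul_add, smul_smul, mul_div_cancel₀ _ hab.ne']

theorem isClosed_setOf_mem_smul {M E : Type*} [TopologicalSpace M] [T2Space M]
    [TopologicalSpace E] [T2Space E] [SMul M E] [ContinuousSMul M E] {J : Set M} {K : Set E}
    (hJ : IsCompact J) (hK : IsCompact K) :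
    IsClosed {p : M × E | p.1 ∈ J ∧ p.2 ∈ p.1 • K} := by
  have himage : {p : M × E | p.1 ∈ J ∧ p.2 ∈ p.1 • K} =
      (fun p : M × E => (p.1, p.1 • p.2)) '' (J ×ˢ K) := by
    ext p
    constructor
    · rintro ⟨ha, y, hy, hyp⟩
      exact ⟨(p.1, y), ⟨ha, hy⟩, Prod.ext rfl hyp⟩
    · rintro ⟨q, ⟨ha, hy⟩, rfl⟩
      exact ⟨ha, smul_mem_smul_set hy⟩
  rw [himage]
  exact ((hJ.prod hK).image (by fun_prop)).isClosed

section Covering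

variable {V : Type*} [NormedAddCommGroup V] [NormedSpace ℝ V] {K : Set V} {k : V}
  {lam mu b : ℝ} {m : ℕ}

theorem coversWith_iff :
    CoversWith K lam m ↔ ∃ t : Fin m → V, ∀ x ∈ K, ∃ i, x - t i ∈ lam • K := by
  simp only [CoversWith, subset_def, mem_iUnion, mem_image, mem_smul_set, eq_sub_iff_add_eq]

theorem CoversWith.pos (h : CoversWith K lam m) (hne : K.Nonempty) : 0 < m := by
  obtain ⟨t, ht⟩ := coversWith_iff.1 h
  obtain ⟨x, hx⟩ := hne
  obtain ⟨i, -⟩ := ht x hx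
  exact i.pos

theorem coversWith_one (hm : 0 < m) : CoversWith K 1 m :=
  coversWith_iff.2 ⟨0, fun x hx => ⟨⟨0, hm⟩, by simpa using hx⟩⟩

theorem exists_coversWith (hcomp : IsCompact K) (hint : (interior K).Nonempty) (hlam : lam ≠ 0) :
    ∃ n, CoversWith K lam n := by
  have hint' : (interior (lam • K)).Nonempty := by
    rw [interior_smul₀ hlam]
    exact hint.smul_set
  obtain ⟨s, hs⟩ := compact_covered_by_add_left_translates hcomp hint'
  refine ⟨s.card, coversWith_iff.2 ⟨fun i => -(s.equivFin.symm i : V), fun x hx => ?_⟩⟩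
  obtain ⟨g, hg, hxg⟩ := mem_iUnion₂.1 (hs hx)
  exact ⟨s.equivFin ⟨g, hg⟩, by simpa [add_comm x] using hxg⟩

theorem CoversWith.mono (h : CoversWith K lam m) (hstar : StarConvex ℝ k K) (hlam : 0 ≤ lam)
    (hle : lam ≤ mu) : CoversWith K mu m := by
  obtain rfl | hlt := hle.eq_or_lt
  · exact h
  obtain ⟨t, ht⟩ := coversWith_iff.1 h
  refine coversWith_iff.2 ⟨fun i => t i - (mu - lam) • k, fun x hx => ?_⟩
  obtain ⟨i, y, hy, hyx : lam • y = x - t i⟩ := ht x hx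
  refine ⟨i, ?_⟩
  have hmem : (mu - lam) • k + lam • y ∈ (mu - lam + lam) • K :=
    smul_add_smul_mem_add_smul hstar hy (sub_nonneg.2 hle) hlam (by linarith)
  rw [sub_add_cancel, hyx] at hmem
  rwa [← sub_add, add_comm]

theorem CoversWith.exists_translations_mem (h : CoversWith K lam m) (hne : K.Nonempty) :
    ∃ t : Fin m → V, (∀ i, t i ∈ K - lam • K) ∧ ∀ x ∈ K, ∃ i, x - t i ∈ lam • K := by
  obtain ⟨t, ht⟩ := coversWith_iff.1 h
  have htrim (i : Fin m) : ∃ s ∈ K - lam • K, ∀ x ∈ K, x - t i ∈ lam • K → x - s ∈ lam • K := by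
    by_cases hmeet : ∃ x ∈ K, x - t i ∈ lam • K
    · obtain ⟨x, hx, hxt⟩ := hmeet
      exact ⟨t i, ⟨x, hx, x - t i, hxt, sub_sub_cancel x (t i)⟩, fun _ _ => id⟩
    · obtain ⟨s, hs⟩ := hne.sub (hne.smul_set (a := lam))
      exact ⟨s, hs, fun x hx hxt => absurd ⟨x, hx, hxt⟩ hmeet⟩
  choose s hs hts using htrim
  exact ⟨s, hs, fun x hx => (ht x hx).imp fun i => hts i x hx⟩

theorem isCompact_setOf_coversWith {J : Set ℝ} (hcomp : IsCompact K) (hne : K.Nonempty)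
    (hJ : IsCompact J) (m : ℕ) : IsCompact {a ∈ J | CoversWith K a m} := by
  let C : Set (ℝ × (Fin m → V)) := ⋂ x ∈ K, ⋃ i, {p | p.1 ∈ J ∧ x - p.2 i ∈ p.1 • K}
  have hC : IsClosed C :=
    isClosed_biInter fun x _ => isClosed_iUnion_of_finite fun i =>
      (isClosed_setOf_mem_smul hJ hcomp).preimage
        (f := fun p : ℝ × (Fin m → V) => (p.1, x - p.2 i)) (by fun_prop)
  have hB : IsCompact (K - J • K) := by
    rw [sub_eq_add_neg]
    exact hcomp.add (hJ.smul_set hcomp).neg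
  have himage : {a ∈ J | CoversWith K a m} =
      Prod.fst '' (J ×ˢ univ.pi (fun _ : Fin m => K - J • K) ∩ C) := by
    ext a
    constructor
    · rintro ⟨ha, hcov⟩
      obtain ⟨t, htB, ht⟩ := hcov.exists_translations_mem hne
      refine ⟨(a, t), ⟨⟨ha, fun i _ => ?_⟩, ?_⟩, rfl⟩
      · exact sub_subset_sub_left (smul_set_subset_smul ha) (htB i)
      · simpa [C, ha] using ht
    · rintro ⟨⟨a, t⟩, ⟨⟨ha, -⟩, ht⟩, rfl⟩
      simp only [C, mem_iInter, mem_iUnion] at ht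
      exact ⟨ha, coversWith_iff.2 ⟨t, fun x hx => (ht x hx).imp fun _ hi => hi.2⟩⟩
  rw [himage]
  exact ((hJ.prod (isCompact_univ_pi fun _ => hB)).inter_right hC).image continuous_fst

theorem gammaC_nonneg : 0 ≤ gammaC m K :=
  Real.sInf_nonneg fun _ h => h.1.le

theorem CoversWith.gammaC_le (h : CoversWith K lam m) (hlam : 0 < lam) : gammaC m K ≤ lam :=
  csInf_le ⟨0, fun _ h => h.1.le⟩ ⟨hlam, h⟩

theorem coversWith_of_gammaC_lt (hstar : StarConvex ℝ k K) (hm : 0 < m) (h : gammaC m K < lam) :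
    CoversWith K lam m := by
  have hne : {a : ℝ | 0 < a ∧ CoversWith K a m}.Nonempty := ⟨1, one_pos, coversWith_one hm⟩
  obtain ⟨a, ⟨ha, hcov⟩, hlt⟩ := exists_lt_of_csInf_lt hne h
  exact hcov.mono hstar ha.le hlt.le

theorem coversWith_of_gammaC_le (hcomp : IsCompact K) (hstar : StarConvex ℝ k K)
    (hne : K.Nonempty) (hm : 0 < m) (h : gammaC m K ≤ lam) : CoversWith K lam m := by
  have hsub : Ioc lam (lam + 1) ⊆ {a ∈ Icc lam (lam + 1) | CoversWith K a m} := fun a ha =>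
    ⟨Ioc_subset_Icc_self ha, coversWith_of_gammaC_lt hstar hm (h.trans_lt ha.1)⟩
  have hclosed : IsClosed {a ∈ Icc lam (lam + 1) | CoversWith K a m} :=
    (isCompact_setOf_coversWith hcomp hne isCompact_Icc m).isClosed
  have hmem : lam ∈ closure (Ioc lam (lam + 1)) := by
    rw [closure_Ioc (lt_add_one lam).ne]
    exact left_mem_Icc.2 (lt_add_one lam).le
  exact (closure_minimal hsub hclosed hmem).2

theorem covN_le (h : CoversWith K lam m) : covN lam K ≤ m :=
  Nat.sInf_le h

theorem coversWith_covN_s13 (h : ∃ n, CoversWith K lam n) : CoversWith K lam (covN lam K) :=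
  Nat.sInf_mem h

theorem le_div_one_sub_gammaC (h : gammaC m K < 1) : (m : ℝ) ≤ m / (1 - gammaC m K) :=
  le_div_self m.cast_nonneg (sub_pos.2 h) (sub_le_self 1 gammaC_nonneg)

theorem le_coin (hex : ∃ m, 0 < m ∧ gammaC m K ≤ 1 / 2)
    (hb : ∀ m : ℕ, 0 < m → gammaC m K ≤ 1 / 2 → b ≤ m) : b ≤ coin K := by
  obtain ⟨n, hn, hnK⟩ := hex
  refine le_csInf ⟨_, n, hn, hnK, rfl⟩ ?_
  rintro _ ⟨m, hm, hmK, rfl⟩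
  exact (hb m hm hmK).trans (le_div_one_sub_gammaC (hmK.trans_lt one_half_lt_one))

theorem coin_le (hm : 0 < m) (h : gammaC m K ≤ 1 / 2) : coin K ≤ m / (1 - gammaC m K) := by
  refine csInf_le ⟨0, ?_⟩ ⟨m, hm, h, rfl⟩
  rintro _ ⟨n, -, hn, rfl⟩
  exact n.cast_nonneg.trans (le_div_one_sub_gammaC (hn.trans_lt one_half_lt_one))

theorem CoversWith.coin_le_two_mul (h : CoversWith K (1 / 2) m) (hne : K.Nonempty) :
    coin K ≤ 2 * m := by
  have hgamma : gammaC m K ≤ 1 / 2 := h.gammaC_le one_half_pos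
  calc coin K ≤ m / (1 - gammaC m K) := coin_le (h.pos hne) hgamma
    _ ≤ m / (1 / 2) := by gcongr; linarith
    _ = 2 * m := by ring

theorem covN_le_coin_le_general (hcomp : IsCompact K) (hstar : StarConvex ℝ k K)
    (hne : K.Nonempty) (hfin : ∃ n, CoversWith K (1 / 2) n) :
    (covN (1 / 2 : ℝ) K : ℝ) ≤ coin K ∧ coin K ≤ 2 * (covN (1 / 2 : ℝ) K : ℝ) := by
  have hcov : CoversWith K (1 / 2) (covN (1 / 2) K) := coversWith_covN_s13 hfin
  refine ⟨le_coin ⟨_, hcov.pos hne, hcov.gammaC_le one_half_pos⟩ fun m hm hmK => ?_,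
    hcov.coin_le_two_mul hne⟩
  exact_mod_cast covN_le (coversWith_of_gammaC_le hcomp hstar hne hm hmK)

end Covering

/-- `N_{1/2}(K) ≤ coin(K) ≤ 2 N_{1/2}(K)`. -/
theorem covN_le_coin_le (d : ℕ) (K : Set (Fin d → ℝ)) (hK : IsConvexBody K) :
    (covN (1 / 2 : ℝ) K : ℝ) ≤ coin K ∧ coin K ≤ 2 * (covN (1 / 2 : ℝ) K : ℝ) := by
  obtain ⟨hcomp, hconv, x, hx⟩ := hK
  exact covN_le_coin_le_general hcomp (hconv.starConvex (interior_subset hx))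
    ⟨x, interior_subset hx⟩ (exists_coversWith hcomp ⟨x, hx⟩ (by norm_num))
end
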